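/- arXiv:2306.03281 — 2 statements merged into one kernel-verified Lean document; each statement's English description precedes it below -/
import Mathlib

section
/- Let m be a positive integer. Every subset S of Q̄^m that is closed under complex conjugation and contains the origin (0,…,0) is the exceptional set of uncountably many transcendental entire functions f ∈ ℚ[[z₁,…,z_m]]; that is, the set of entire functions f : ℂ^m → ℂ that are transcendental over ℂ(z₁,…,z_m), belong to ℚ[[z₁,…,z_m]], and satisfy S_f = S, is uncountable. -/
open scoped BigOperators

/-!
Start from the coefficients `1 / k!` and perturb them by at most `1 / (2 k!)`. Two kinds of real
linear functionals of the coefficients are to be prescribed: each coefficient itself, and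
`re + im` of the value at each nonzero algebraic point. By Dedekind's theorem on characters these
functionals are linearly independent, and there are countably many, so the perturbation can be built
one functional at a time, each step adding a small finitely supported correction that leaves the
earlier functionals unchanged. Thus each functional can be moved into any given dense set: the
rationals for the coefficients, and for the values the rationals on `S` and the transcendental
numbers off `S`. A series `f` with real coefficients satisfies `f (conj α) = conj (f α)`, so the
`re + im` of `f α` and `f (conj α)` determine `f α`. As `S` is closed under conjugation, this makes
`f α` algebraic exactly for `α ∈ S`; at the origin, where `re + im` carries no new condition,
`f 0` is a rational coefficient.

The coefficients stay positive, so `f` grows faster than every polynomial along positive real lines,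
which rules out an algebraic equation. The dense sets may also each omit one point, so `f` can be
made to differ from a prescribed function at every nonzero algebraic point; a diagonal argument then
excludes a countable list of all solutions.
-/

section DenseTargets

variable {ι K : Type*}

lemma exists_linearCombination_eq {F : Type*} [Field F] {l : ι → K → F}
    (hl : LinearIndependent F l) (s : Finset ι) (x : ι → F) :
    ∃ u : K →₀ F, ∀ i ∈ s, Finsupp.linearCombination F (l i) u = x i := by
  have hspan : Submodule.span F (Set.range fun k (i : s) => l i k) = ⊤ :=
    span_flip_eq_top_iff_linearIndependent.mpr (hl.comp _ Subtype.val_injective)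
  obtain ⟨u, hu⟩ := Finsupp.mem_span_range_iff_exists_finsupp.mp
    (hspan.symm ▸ Submodule.mem_top (x := fun i : s => x i))
  refine ⟨u, fun i hi => ?_⟩
  simpa [Finsupp.linearCombination_apply, Finsupp.sum] using congrFun hu ⟨i, hi⟩

lemma exists_pos_forall_norm_le_mul {E : Type*} [SeminormedAddCommGroup E] {w : K → ℝ}
    (hw : ∀ k, 0 < w k) (u : K →₀ E) : ∃ C : ℝ, 0 < C ∧ ∀ k, ‖u k‖ ≤ C * w k := by
  obtain ⟨M, hM⟩ := (u.support.image fun k => ‖u k‖ / w k).exists_le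
  refine ⟨max M 1, by positivity, fun k => ?_⟩
  by_cases hk : k ∈ u.support
  · exact (div_le_iff₀ (hw k)).mp ((hM _ (Finset.mem_image_of_mem _ hk)).trans (le_max_left _ _))
  · rw [Finsupp.notMem_support_iff.mp hk, norm_zero]
    exact mul_nonneg (by positivity) (hw k).le

lemma exists_forall_norm_lt_and_add_mem {E : Type*} [SeminormedAddCommGroup E] [Preorder ι]
    [WellFoundedLT ι] {A : ι → Set E} (hA : ∀ i, Dense (A i)) {δ : ι → ℝ} (hδ : ∀ i, 0 < δ i)
    (F : ∀ i, (∀ j, j < i → E) → E) :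
    ∃ τ : ι → E, ∀ i, ‖τ i‖ < δ i ∧ F i (fun j _ => τ j) + τ i ∈ A i := by
  have hstep : ∀ i x, ∃ t, ‖t‖ < δ i ∧ x + t ∈ A i := by
    intro i x
    obtain ⟨y, hy, hxy⟩ := (hA i).exists_dist_lt x (hδ i)
    exact ⟨y - x, by rwa [← dist_eq_norm, dist_comm], by simpa⟩
  choose t ht using hstep
  let τ : ι → E := WellFoundedLT.fix fun i τ => t i (F i τ)
  have hτ : ∀ i, τ i = t i (F i fun j _ => τ j) := WellFoundedLT.fix_eq _
  refine ⟨τ, fun i => ?_⟩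
  rw [hτ i]
  exact ht i _

variable {𝕜 : Type*} [NormedField 𝕜] [CompleteSpace 𝕜]

lemma tsum_tsum_mul_comm {v : ι → K → 𝕜} {ε : ι → ℝ} {w : K → ℝ} {l : K → 𝕜} (hε : Summable ε)
    (hl : Summable fun k => w k * ‖l k‖) (hv : ∀ i k, ‖v i k‖ ≤ ε i * w k) :
    ∑' k, (∑' i, v i k) * l k = ∑' i, ∑' k, v i k * l k := by
  have hprod : Summable (Function.uncurry fun i k => v i k * l k) := by
    refine .of_norm_bounded (summable_mul_of_summable_norm hε.norm hl.norm) fun ⟨i, k⟩ => ?_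
    calc ‖v i k * l k‖ ≤ ε i * w k * ‖l k‖ := by
          rw [norm_mul]; gcongr; exact hv i k
      _ = ε i * (w k * ‖l k‖) := mul_assoc ..
  simp only [← tsum_mul_right]
  exact hprod.tsum_comm

lemma tsum_tsum_finsupp_mul_of_triangular [LinearOrder ι] [LocallyFiniteOrderBot ι]
    {l : K → 𝕜} {u : ι → K →₀ 𝕜} {i : ι} (hone : Finsupp.linearCombination 𝕜 l (u i) = 1)
    (hzero : ∀ j, i < j → Finsupp.linearCombination 𝕜 l (u j) = 0) {τ : ι → 𝕜} {ε : ι → ℝ}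
    {w : K → ℝ} (hε : Summable ε) (hl : Summable fun k => w k * ‖l k‖)
    (hτ : ∀ j k, ‖τ j * u j k‖ ≤ ε j * w k) :
    ∑' k, (∑' j, τ j * u j k) * l k =
      ∑ j ∈ Finset.Iio i, τ j * Finsupp.linearCombination 𝕜 l (u j) + τ i :=
  calc ∑' k, (∑' j, τ j * u j k) * l k
      = ∑' j, ∑' k, τ j * u j k * l k := tsum_tsum_mul_comm hε hl hτ
    _ = ∑' j, τ j * Finsupp.linearCombination 𝕜 l (u j) := tsum_congr fun j => by
        simp only [mul_assoc, tsum_mul_left, Finsupp.linearCombination_apply, smul_eq_mul]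
        rw [Finsupp.sum, tsum_eq_sum]
        simp +contextual
    _ = ∑ j ∈ Finset.Iic i, τ j * Finsupp.linearCombination 𝕜 l (u j) :=
        tsum_eq_sum fun j hj => by rw [hzero j (by simpa using hj), mul_zero]
    _ = ∑ j ∈ Finset.Iio i, τ j * Finsupp.linearCombination 𝕜 l (u j) + τ i := by
        rw [← Finset.Iio_insert, Finset.sum_insert (by simp), hone, mul_one, add_comm]

/- The perturbation is a series `∑ τ i • u i`, where the finitely supported `u i` pairs to `1` with
`l i` and to `0` with every earlier `l j`: choosing `τ i` moves the `i`-th sum into `A i` without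
disturbing the sums settled before. -/
theorem exists_norm_le_forall_tsum_mul_mem_of_linearOrder [LinearOrder ι] [LocallyFiniteOrderBot ι]
    {w : K → ℝ} (hw : ∀ k, 0 < w k) {l : ι → K → 𝕜} (hl : LinearIndependent 𝕜 l)
    (hsum : ∀ i, Summable fun k => w k * ‖l i k‖) {A : ι → Set 𝕜} (hA : ∀ i, Dense (A i)) :
    ∃ d : K → 𝕜, (∀ k, ‖d k‖ ≤ w k) ∧ ∀ i, ∑' k, d k * l i k ∈ A i := by
  have hcard : StrictMono fun i : ι => (Finset.Iic i).card := fun i j hij =>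
    Finset.card_lt_card (Finset.Iic_ssubset_Iic.mpr hij)
  have : WellFoundedLT ι := hcard.wellFoundedLT
  have : Countable ι := hcard.injective.countable
  choose u hu using fun i => exists_linearCombination_eq hl (Finset.Iic i) (Pi.single i 1)
  have hone (i) : Finsupp.linearCombination 𝕜 (l i) (u i) = 1 := by simpa using hu i i (by simp)
  have hzero (i j) (hij : i < j) : Finsupp.linearCombination 𝕜 (l i) (u j) = 0 := by
    simpa [hij.ne] using hu j i (by simpa using hij.le)
  choose C hC0 hC using fun i => exists_pos_forall_norm_le_mul hw (u i)
  obtain ⟨ε, hε0, c, hε, hc⟩ := NNReal.exists_pos_sum_of_countable one_ne_zero ι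
  replace hε : HasSum (fun i => (ε i : ℝ)) c := NNReal.hasSum_coe.mpr hε
  obtain ⟨τ, hτ⟩ := exists_forall_norm_lt_and_add_mem hA
    (fun i => div_pos (NNReal.coe_pos.mpr (hε0 i)) (hC0 i))
    (fun i τ => ∑ j ∈ (Finset.Iio i).attach,
      τ j (Finset.mem_Iio.mp j.2) * Finsupp.linearCombination 𝕜 (l i) (u j))
  have hbound (i k) : ‖τ i * u i k‖ ≤ ε i * w k := by
    calc ‖τ i * u i k‖ ≤ ε i / C i * (C i * w k) := by
          rw [norm_mul]
          exact mul_le_mul (hτ i).1.le (hC i k) (norm_nonneg _) (div_nonneg (ε i).2 (hC0 i).le)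
      _ = ε i * w k := by rw [← mul_assoc, div_mul_cancel₀ _ (hC0 i).ne']
  refine ⟨fun k => ∑' i, τ i * u i k, fun k => ?_, fun i => ?_⟩
  · exact (tsum_of_norm_bounded (hε.mul_right (w k)) (hbound · k)).trans
      (mul_le_of_le_one_left (hw k).le (NNReal.coe_le_one.mpr hc.le))
  · rw [tsum_tsum_finsupp_mul_of_triangular (hone i) (hzero i) hε.summable (hsum i) hbound,
      ← Finset.sum_attach]
    exact (hτ i).2

theorem exists_norm_le_forall_tsum_mul_mem [Countable ι] {w : K → ℝ} (hw : ∀ k, 0 < w k)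
    {l : ι → K → 𝕜} (hl : LinearIndependent 𝕜 l) (hsum : ∀ i, Summable fun k => w k * ‖l i k‖)
    {A : ι → Set 𝕜} (hA : ∀ i, Dense (A i)) :
    ∃ d : K → 𝕜, (∀ k, ‖d k‖ ≤ w k) ∧ ∀ i, ∑' k, d k * l i k ∈ A i := by
  obtain ⟨e, he⟩ := exists_injective_nat ι
  let _ : LinearOrder ι := .lift' e he
  let _ : LocallyFiniteOrderBot ι := .ofIic ι
    (fun i => ((Set.finite_Iic (e i)).preimage he.injOn).toFinset) (by
      simp only [Set.Finite.mem_toFinset, Set.mem_preimage, Set.mem_Iic]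
      exact fun _ _ => Iff.rfl)
  exact exists_norm_le_forall_tsum_mul_mem_of_linearOrder hw hl hsum hA

theorem exists_norm_sub_le_forall_tsum_mul_mem [Countable ι] {w : K → ℝ} (hw : ∀ k, 0 < w k)
    {l : ι → K → 𝕜} (hl : LinearIndependent 𝕜 l) (hsum : ∀ i, Summable fun k => w k * ‖l i k‖)
    {A : ι → Set 𝕜} (hA : ∀ i, Dense (A i)) {c₀ : K → 𝕜}
    (hc₀ : ∀ i, Summable fun k => c₀ k * l i k) :
    ∃ c : K → 𝕜, (∀ k, ‖c k - c₀ k‖ ≤ w k) ∧ ∀ i, ∑' k, c k * l i k ∈ A i := by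
  obtain ⟨d, hdw, hdA⟩ := exists_norm_le_forall_tsum_mul_mem hw hl hsum
    fun i => (hA i).preimage (Homeomorph.addLeft (∑' k, c₀ k * l i k)).isOpenMap
  refine ⟨c₀ + d, by simpa using hdw, fun i => ?_⟩
  have hd : Summable fun k => d k * l i k := .of_norm_bounded (hsum i) fun k => by
    rw [norm_mul]; gcongr; exact hdw k
  simpa [add_mul, (hc₀ i).tsum_add hd] using hdA i

end DenseTargets

section Monomials

lemma linearIndependent_sumElim_single {ι K R : Type*} [DecidableEq K] [Ring R] {l : ι → K → R}
    (hl : ∀ b : ι →₀ R, (Function.support (Finsupp.linearCombination R l b)).Finite → b = 0) :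
    LinearIndependent R (Sum.elim (fun k => Pi.single k (1 : R)) l) := by
  refine linearIndependent_sum.mpr ⟨Pi.linearIndependent_single_one K R, ?_, ?_⟩
  · exact linearIndependent_iff.mpr fun b hb => hl b (by
      rw [show Finsupp.linearCombination R l b = 0 from hb]; simp)
  · refine Submodule.disjoint_def.mpr fun x hx hxl => ?_
    obtain ⟨b, rfl⟩ := Finsupp.mem_span_range_iff_exists_finsupp.mp hxl
    have hfin : ∀ y ∈ Submodule.span R (Set.range fun k : K => Pi.single k (1 : R)),
        (Function.support y).Finite := fun y hy => by
      induction hy using Submodule.span_induction with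
      | mem y hy =>
        obtain ⟨k, rfl⟩ := hy
        exact (Set.finite_singleton k).subset Pi.support_single_subset
      | zero => simp
      | add y z _ _ hy hz => exact (hy.union hz).subset (Function.support_add _ _)
      | smul r y _ hy => exact hy.subset (Function.support_const_smul_subset r y)
    rw [hl b (hfin _ hx), Finsupp.sum_zero_index]

variable {σ R : Type*} [Fintype σ]

/-- The map `k ↦ ∏ i, z i ^ k i` on exponents as a monoid homomorphism, the form in which Dedekind's
theorem on the independence of characters applies to evaluations at points. -/
def monomialHom [CommMonoid R] (z : σ → R) : Multiplicative (σ → ℕ) →* R where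
  toFun k := ∏ i, z i ^ k.toAdd i
  map_one' := by simp
  map_mul' k k' := by simp [pow_add, Finset.prod_mul_distrib]

lemma prod_pow_single [DecidableEq σ] [CommMonoid R] (z : σ → R) (i : σ) (n : ℕ) :
    ∏ j, z j ^ (Pi.single i n : σ → ℕ) j = z i ^ n := by
  rw [Fintype.prod_eq_single i fun j hj => by simp [hj], Pi.single_eq_same]

lemma monomialHom_injective [CommMonoid R] :
    Function.Injective (monomialHom : (σ → R) → Multiplicative (σ → ℕ) →* R) := by
  classical
  intro z z' h
  funext i
  simpa [monomialHom, prod_pow_single] using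
    DFunLike.congr_fun h (Multiplicative.ofAdd (Pi.single i 1))

lemma linearIndependent_prod_pow [CommRing R] [IsDomain R] :
    LinearIndependent R fun (z : σ → R) (k : σ → ℕ) => ∏ i, z i ^ k i :=
  (linearIndependent_monoidHom (Multiplicative (σ → ℕ)) R).comp _ monomialHom_injective

/- Multiplying the coefficient of `z` by `z i ^ N` shifts the exponents by `N` in direction `i`,
past the finite support; Dedekind's theorem then kills every coefficient with `z i ≠ 0`. -/
lemma eq_zero_of_finite_support_sum_prod_pow [CommRing R] [IsDomain R] {a : (σ → R) →₀ R}
    (ha : (Function.support fun k : σ → ℕ => a.sum fun z x => x * ∏ i, z i ^ k i).Finite)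
    {z : σ → R} (hz : z ≠ 0) : a z = 0 := by
  classical
  obtain ⟨i, hi⟩ : ∃ i, z i ≠ 0 := Function.ne_iff.mp hz
  obtain ⟨N, hN⟩ := (ha.image (· i)).bddAbove
  have hshift : ∑ y ∈ a.support, (a y * y i ^ (N + 1)) • (fun k : σ → ℕ => ∏ j, y j ^ k j) = 0 := by
    funext k
    have hvanish : (a.sum fun y x => x * ∏ j, y j ^ (k + Pi.single i (N + 1) : σ → ℕ) j) = 0 := by
      by_contra hne
      have hle : (k + Pi.single i (N + 1) : σ → ℕ) i ≤ N := hN ⟨_, hne, rfl⟩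
      simp only [Pi.add_apply, Pi.single_eq_same] at hle
      omega
    rw [Finset.sum_apply, Pi.zero_apply, ← hvanish, Finsupp.sum]
    refine Finset.sum_congr rfl fun y _ => ?_
    simp only [Pi.smul_apply, smul_eq_mul, Pi.add_apply, pow_add, Finset.prod_mul_distrib,
      prod_pow_single]
    ring
  have hcoeff := linearIndependent_iff'.mp (linearIndependent_prod_pow (σ := σ) (R := R))
    a.support _ hshift z
  by_contra haz
  exact mul_ne_zero haz (pow_ne_zero _ hi) (hcoeff (Finsupp.mem_support_iff.mpr haz))

end Monomials

section ReAddIm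

open Complex

/-- The real functional `z ↦ re z + im z`. Its values at `z` and at `conj z` together determine `z`,
so that one real condition at each point of `ℂ ^ σ` controls the values of a series with real
coefficients. -/
noncomputable def reAddIm : ℂ →L[ℝ] ℝ := reCLM + imCLM

lemma reAddIm_apply (z : ℂ) : reAddIm z = z.re + z.im := rfl

lemma ofReal_reAddIm (z : ℂ) :
    (reAddIm z : ℂ) = (1 - I) / 2 * z + (1 + I) / 2 * (starRingEnd ℂ) z := by
  apply Complex.ext <;> simp [reAddIm_apply] <;> ring

lemma eq_reAddIm_add_reAddIm_conj (z : ℂ) :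
    z = (1 + I) / 2 * reAddIm z + (1 - I) / 2 * reAddIm ((starRingEnd ℂ) z) := by
  apply Complex.ext <;> simp [reAddIm_apply] <;> ring

lemma abs_reAddIm_le (z : ℂ) : |reAddIm z| ≤ 2 * ‖z‖ := by
  have := abs_add_le z.re z.im
  linarith [reAddIm_apply z ▸ this, abs_re_le_norm z, abs_im_le_norm z]

variable {σ : Type*} [Fintype σ]

lemma eq_zero_of_finite_support_sum_reAddIm {b : (σ → ℂ) →₀ ℝ}
    (hb : (Function.support fun k : σ → ℕ =>
      b.sum fun z x => x * reAddIm (∏ i, z i ^ k i)).Finite)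
    {z : σ → ℂ} (hz : z ≠ 0) : b z = 0 := by
  let conjEquiv : (σ → ℂ) ≃ (σ → ℂ) := star_involutive.toPerm
  let b' : (σ → ℂ) →₀ ℂ := b.mapRange ofReal ofReal_zero
  let a : (σ → ℂ) →₀ ℂ := ((1 - I) / 2) • b' + ((1 + I) / 2) • b'.equivMapDomain conjEquiv
  have hsum (k : σ → ℕ) : (a.sum fun z x => x * ∏ i, z i ^ k i) =
      ((b.sum fun z x => x * reAddIm (∏ i, z i ^ k i) : ℝ) : ℂ) := by
    rw [Finsupp.sum_add_index' (by simp) (by intros; ring), Finsupp.sum_smul_index (by simp),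
      Finsupp.sum_smul_index (by simp), Finsupp.sum_equivMapDomain,
      Finsupp.sum_mapRange_index (by simp), Finsupp.sum_mapRange_index (by simp)]
    simp only [Finsupp.sum, ofReal_sum, ofReal_mul, ofReal_reAddIm, ← Finset.sum_add_distrib]
    refine Finset.sum_congr rfl fun y _ => ?_
    simp [conjEquiv]; ring
  have haz : a z = 0 :=
    eq_zero_of_finite_support_sum_prod_pow (by simpa [hsum, Function.support] using hb) hz
  have hcoeff : (1 - I) / 2 * b z + (1 + I) / 2 * b (star z) = 0 := haz
  have hre : 2⁻¹ * b z + 2⁻¹ * b (star z) = 0 := by simpa using congrArg re hcoeff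
  have him : -1 / 2 * b z + 2⁻¹ * b (star z) = 0 := by simpa using congrArg im hcoeff
  linarith

lemma linearIndependent_sumElim_single_reAddIm [DecidableEq (σ → ℕ)] {X : Set (σ → ℂ)}
    (hX : 0 ∉ X) : LinearIndependent ℝ (Sum.elim (fun k : σ → ℕ => Pi.single k (1 : ℝ))
      fun (z : X) k => reAddIm (∏ i, (z : σ → ℂ) i ^ k i)) := by
  refine linearIndependent_sumElim_single fun b hb => DFunLike.ext _ _ fun z => ?_
  have hsum (k : σ → ℕ) : ((b.mapDomain Subtype.val).sum fun z x => x * reAddIm (∏ i, z i ^ k i)) =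
      Finsupp.linearCombination ℝ (fun (z : X) k => reAddIm (∏ i, (z : σ → ℂ) i ^ k i)) b k := by
    rw [Finsupp.sum_mapDomain_index (by simp) (by intros; ring),
      Finsupp.linearCombination_apply, Finsupp.sum, Finsupp.sum, Finset.sum_apply]
    rfl
  rw [← Finsupp.mapDomain_apply Subtype.val_injective]
  exact eq_zero_of_finite_support_sum_reAddIm (by simpa only [hsum] using hb)
    (ne_of_mem_of_not_mem z.2 hX)

end ReAddIm

section EntireSeries

variable {σ : Type*} [Fintype σ]

lemma summable_prod_apply_of_nonneg {β : Type*} {f : σ → β → ℝ} (hf0 : ∀ i b, 0 ≤ f i b)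
    (hf : ∀ i, Summable (f i)) : Summable fun k : σ → β => ∏ i, f i (k i) := by
  classical
  refine summable_of_sum_le (c := ∏ i, ∑' b, f i b)
    (fun k => Finset.prod_nonneg fun i _ => hf0 i (k i)) fun s => ?_
  calc ∑ k ∈ s, ∏ i, f i (k i)
      ≤ ∑ k ∈ Fintype.piFinset fun i => s.image (· i), ∏ i, f i (k i) :=
        Finset.sum_le_sum_of_subset_of_nonneg
          (fun k hk => Fintype.mem_piFinset.mpr fun i => Finset.mem_image_of_mem (· i) hk)
          fun k _ _ => Finset.prod_nonneg fun i _ => hf0 i (k i)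
    _ = ∏ i, ∑ b ∈ s.image (· i), f i b := (Finset.prod_univ_sum _ _).symm
    _ ≤ ∏ i, ∑' b, f i b := Finset.prod_le_prod
        (fun i _ => Finset.sum_nonneg fun b _ => hf0 i b)
        fun i _ => (hf i).sum_le_tsum _ fun b _ => hf0 i b

/-- The reciprocal `1 / k!` of the multi-index factorial `k! = ∏ i, (k i)!`; coefficients of this
size define entire series. -/
noncomputable def invFactorial (k : σ → ℕ) : ℝ := ∏ i, ((k i).factorial : ℝ)⁻¹

lemma invFactorial_pos (k : σ → ℕ) : 0 < invFactorial k :=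
  Finset.prod_pos fun i _ => inv_pos.mpr (Nat.cast_pos.mpr (k i).factorial_pos)

lemma summable_invFactorial_mul_prod_pow {r : σ → ℝ} (hr : ∀ i, 0 ≤ r i) :
    Summable fun k : σ → ℕ => invFactorial k * ∏ i, r i ^ k i := by
  simp only [invFactorial, ← Finset.prod_mul_distrib, inv_mul_eq_div]
  exact summable_prod_apply_of_nonneg (f := fun i (n : ℕ) => r i ^ n / n.factorial)
    (fun i n => div_nonneg (pow_nonneg (hr i) n) (Nat.cast_nonneg _))
    fun i => Real.summable_pow_div_factorial (r i)

lemma summable_norm_mul_prod_pow {E : Type*} [SeminormedAddCommGroup E] {c : (σ → ℕ) → E} {C : ℝ}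
    (hc : ∀ k, ‖c k‖ ≤ C * invFactorial k) {r : σ → ℝ} (hr : ∀ i, 0 ≤ r i) :
    Summable fun k : σ → ℕ => ‖c k‖ * ∏ i, r i ^ k i := by
  have hprod (k : σ → ℕ) : 0 ≤ ∏ i, r i ^ k i :=
    Finset.prod_nonneg fun i _ => pow_nonneg (hr i) (k i)
  refine .of_nonneg_of_le (fun k => mul_nonneg (norm_nonneg _) (hprod k)) (fun k => ?_)
    ((summable_invFactorial_mul_prod_pow hr).mul_left C)
  rw [← mul_assoc]
  exact mul_le_mul_of_nonneg_right (hc k) (hprod k)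

lemma exists_forall_prod_eq_prod_pow {n : ℕ} {k : σ → ℕ} (hk : ∑ i, k i = n) (M : Type*)
    [CommMonoid M] : ∃ s : Fin n → σ, ∀ y : σ → M, ∏ j, y (s j) = ∏ i, y i ^ k i := by
  let e : (Σ i, Fin (k i)) ≃ Fin n := Fintype.equivFinOfCardEq (by simp [hk])
  refine ⟨fun j => (e.symm j).1, fun y => ?_⟩
  rw [e.symm.prod_comp fun p => y p.1, Fintype.prod_sigma]
  simp

variable {𝕜 : Type*} [NontriviallyNormedField 𝕜]

lemma exists_continuousMultilinearMap_eq_prod_pow {n : ℕ} {k : σ → ℕ} (hk : ∑ i, k i = n) :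
    ∃ M : ContinuousMultilinearMap 𝕜 (fun _ : Fin n => σ → 𝕜) 𝕜,
      ‖M‖ ≤ 1 ∧ ∀ y, M (fun _ => y) = ∏ i, y i ^ k i := by
  obtain ⟨s, hs⟩ := exists_forall_prod_eq_prod_pow hk 𝕜
  refine ⟨(ContinuousMultilinearMap.mkPiAlgebra 𝕜 (Fin n) 𝕜).compContinuousLinearMap
    fun j => ContinuousLinearMap.proj (s j), ?_, by simpa using hs⟩
  refine ContinuousMultilinearMap.opNorm_le_bound zero_le_one fun v => ?_
  simpa [norm_prod] using
    Finset.prod_le_prod (fun _ _ => norm_nonneg _) fun j _ => norm_le_pi_norm (v j) (s j)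

lemma hasSum_sum_piAntidiag {E : Type*} [DecidableEq σ] [AddCommMonoid E] [TopologicalSpace E]
    [ContinuousAdd E] [RegularSpace E] {g : (σ → ℕ) → E} {a : E} (hg : HasSum g a) :
    HasSum (fun n => ∑ k ∈ Finset.univ.piAntidiag n, g k) a := by
  have hfiber (n : ℕ) : HasSum (fun k : (fun k : σ → ℕ => ∑ i, k i) ⁻¹' {n} => g k)
      (∑ k ∈ Finset.univ.piAntidiag n, g k) := by
    rw [show (fun k : σ → ℕ => ∑ i, k i) ⁻¹' {n} = (Finset.univ.piAntidiag n : Finset (σ → ℕ)) by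
      ext k; simp]
    exact Finset.hasSum _ g
  exact ((Equiv.sigmaFiberEquiv fun k : σ → ℕ => ∑ i, k i).hasSum_iff.mpr hg).sigma hfiber

theorem exists_hasFPowerSeriesOnBall_of_hasSum_prod_pow [CompleteSpace 𝕜] {c : (σ → ℕ) → 𝕜}
    {f : (σ → 𝕜) → 𝕜} (hf : ∀ z, HasSum (fun k => c k * ∏ i, z i ^ k i) (f z))
    (hc : ∀ r : ℝ, 0 ≤ r → Summable fun k : σ → ℕ => ‖c k‖ * ∏ i, r ^ k i) :
    ∃ p : FormalMultilinearSeries 𝕜 (σ → 𝕜) 𝕜, HasFPowerSeriesOnBall f p 0 ⊤ := by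
  classical
  choose! M hM1 hM using fun n (k : σ → ℕ) =>
    exists_continuousMultilinearMap_eq_prod_pow (𝕜 := 𝕜) (n := n) (k := k)
  let p : FormalMultilinearSeries 𝕜 (σ → 𝕜) 𝕜 := fun n =>
    ∑ k ∈ Finset.univ.piAntidiag n, c k • M n k
  have hnorm (n : ℕ) (r : ℝ) (hr : 0 ≤ r) :
      ‖p n‖ * r ^ n ≤ ∑ k ∈ Finset.univ.piAntidiag n, ‖c k‖ * ∏ i, r ^ k i := by
    refine (mul_le_mul_of_nonneg_right (norm_sum_le _ _) (pow_nonneg hr n)).trans ?_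
    rw [Finset.sum_mul]
    refine Finset.sum_le_sum fun k hk => ?_
    have hkn : ∑ i, k i = n := by simpa using hk
    rw [Finset.prod_pow_eq_pow_sum, hkn, norm_smul]
    exact mul_le_mul_of_nonneg_right
      (mul_le_of_le_one_right (norm_nonneg _) (hM1 n k hkn)) (pow_nonneg hr n)
  refine ⟨p, ?_, by simp, fun {y} _ => ?_⟩
  · refine top_le_iff.mpr (p.radius_eq_top_of_summable_norm fun r => ?_)
    exact .of_nonneg_of_le (fun n => by positivity) (fun n => hnorm n r r.2)
      (hasSum_sum_piAntidiag (hc r r.2).hasSum).summable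
  · rw [zero_add]
    refine (hasSum_sum_piAntidiag (hf y)).congr_fun fun n => ?_
    simp only [p, _root_.sum_apply, _root_.smul_apply, smul_eq_mul]
    exact Finset.sum_congr rfl fun k hk => by rw [hM n k (by simpa using hk)]

/-- The sum of the power series in several complex variables with coefficients `c`, with the junk
value `0` where that series is not summable. -/
noncomputable def monomialSeries (c : (σ → ℕ) → ℂ) (z : σ → ℂ) : ℂ :=
  ∑' k, c k * ∏ i, z i ^ k i

section Bounded

variable {c : (σ → ℕ) → ℂ} {C : ℝ} (hc : ∀ k, ‖c k‖ ≤ C * invFactorial k)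

include hc

lemma hasSum_monomialSeries (z : σ → ℂ) :
    HasSum (fun k => c k * ∏ i, z i ^ k i) (monomialSeries c z) := by
  refine Summable.hasSum (.of_norm ?_)
  simpa [norm_prod] using summable_norm_mul_prod_pow hc fun i => norm_nonneg (z i)

theorem analyticAt_monomialSeries (z : σ → ℂ) : AnalyticAt ℂ (monomialSeries c) z := by
  obtain ⟨p, hp⟩ := exists_hasFPowerSeriesOnBall_of_hasSum_prod_pow (hasSum_monomialSeries hc)
    fun r hr => summable_norm_mul_prod_pow hc fun _ => hr
  exact hp.analyticAt_of_mem (by simp)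

end Bounded

lemma monomialSeries_zero (c : (σ → ℕ) → ℂ) : monomialSeries c 0 = c 0 := by
  rw [monomialSeries, tsum_eq_single 0]
  · simp
  · intro k hk
    obtain ⟨i, hi⟩ := Function.ne_iff.mp hk
    rw [Finset.prod_eq_zero (Finset.mem_univ i) (by simpa using hi), mul_zero]

lemma monomialSeries_ofReal_star (c : (σ → ℕ) → ℝ) (z : σ → ℂ) :
    monomialSeries (fun k => c k) (star z) =
      (starRingEnd ℂ) (monomialSeries (fun k => c k) z) := by
  rw [monomialSeries, monomialSeries, Complex.conj_tsum]
  simp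

lemma reAddIm_monomialSeries_ofReal {c : (σ → ℕ) → ℝ} {C : ℝ}
    (hc : ∀ k, |c k| ≤ C * invFactorial k) (z : σ → ℂ) :
    reAddIm (monomialSeries (fun k => c k) z) = ∑' k, c k * reAddIm (∏ i, z i ^ k i) := by
  have hsum := hasSum_monomialSeries (c := fun k => (c k : ℂ)) (by simpa using hc) z
  refine ((reAddIm.hasSum hsum).tsum_eq.symm).trans (tsum_congr fun k => ?_)
  rw [← Complex.real_smul, map_smul, smul_eq_mul]

theorem exists_coeff_mem_and_reAddIm_monomialSeries_mem {X : Set (σ → ℂ)} (hX : X.Countable)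
    (hX0 : 0 ∉ X) {A : (σ → ℕ) → Set ℝ} (hA : ∀ k, Dense (A k)) {B : (σ → ℂ) → Set ℝ}
    (hB : ∀ z, Dense (B z)) :
    ∃ c : (σ → ℕ) → ℝ, (∀ k, 0 < c k) ∧ (∀ k, |c k| ≤ 2 * invFactorial k) ∧ (∀ k, c k ∈ A k) ∧
      ∀ z ∈ X, reAddIm (monomialSeries (fun k => c k) z) ∈ B z := by
  classical
  have := hX.to_subtype
  let l : (σ → ℕ) ⊕ X → (σ → ℕ) → ℝ :=
    Sum.elim (fun k => Pi.single k 1) fun z k => reAddIm (∏ i, (z : σ → ℂ) i ^ k i)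
  have hl (j) : Summable fun k => invFactorial k * ‖l j k‖ := by
    obtain k | z := j
    · exact summable_of_ne_finset_zero (s := {k}) fun k' hk' => by
        simp [l, Pi.single_eq_of_ne (by simpa using hk')]
    · refine .of_nonneg_of_le (fun k => by have := invFactorial_pos k; positivity) (fun k => ?_)
        ((summable_invFactorial_mul_prod_pow fun i => norm_nonneg (z.1 i)).mul_left 2)
      rw [mul_left_comm]
      have habs := abs_reAddIm_le (∏ i, z.1 i ^ k i)
      simp only [norm_prod, norm_pow] at habs
      exact mul_le_mul_of_nonneg_left habs (invFactorial_pos k).le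
  obtain ⟨c, hcw, hc⟩ := exists_norm_sub_le_forall_tsum_mul_mem (l := l) (c₀ := invFactorial)
    (w := fun k => invFactorial k / 2) (fun k => half_pos (invFactorial_pos k))
    (linearIndependent_sumElim_single_reAddIm hX0)
    (fun j => by simpa only [div_mul_eq_mul_div] using (hl j).div_const 2)
    (A := Sum.elim A fun z => B z) (Sum.rec hA fun z => hB z) fun j => .of_norm (by
      simpa [abs_of_pos (invFactorial_pos _)] using hl j)
  have hpos (k) : 0 < c k := by linarith [(abs_le.mp (hcw k)).1, invFactorial_pos k]
  have hbound (k) : |c k| ≤ 2 * invFactorial k := by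
    rw [abs_of_pos (hpos k)]
    linarith [(abs_le.mp (hcw k)).2, invFactorial_pos k]
  refine ⟨c, hpos, hbound, fun k => by simpa [l, Pi.single_apply] using hc (.inl k), fun z hz => ?_⟩
  rw [reAddIm_monomialSeries_ofReal hbound]
  exact hc (.inr ⟨z, hz⟩)

end EntireSeries

section Transcendence

open Asymptotics Bornology Filter Polynomial

open scoped Polynomial.Bivariate

lemma eventually_evalEval_ne_zero {α 𝕜 : Type*} [NormedField 𝕜] {l : Filter α} {x y : α → 𝕜}
    (hx : Tendsto x l (cobounded 𝕜)) (hxy : ∀ N : ℕ, (fun a => x a ^ N) =O[l] y) {Q : 𝕜[X][Y]}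
    (hQ : Q ≠ 0) : ∀ᶠ a in l, Q.evalEval (x a) (y a) ≠ 0 := by
  have hone : (fun _ => (1 : 𝕜)) =O[l] y := by simpa using hxy 0
  have hlead : (fun a => y a ^ Q.natDegree) =O[l]
      fun a => Q.leadingCoeff.eval (x a) * y a ^ Q.natDegree := by
    have h : (1 : 𝕜[X]).degree ≤ Q.leadingCoeff.degree := by
      simpa using zero_le_degree_iff.mpr (leadingCoeff_ne_zero.mpr hQ)
    simpa [Function.comp_def] using
      ((isBigO_cobounded_of_degree_le h).comp_tendsto hx).mul (isBigO_refl (y · ^ Q.natDegree) l)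
  have hlower (i : ℕ) (hi : i < Q.natDegree) :
      (fun a => (Q.coeff i).eval (x a) * y a ^ i) =o[l] fun a => y a ^ Q.natDegree := by
    have hcoeff : (fun a => (Q.coeff i).eval (x a)) =o[l] y := by
      have h : (Q.coeff i).degree < (X ^ ((Q.coeff i).natDegree + 1) : 𝕜[X]).degree := by
        rw [degree_X_pow]
        exact degree_le_natDegree.trans_lt (by exact_mod_cast Nat.lt_succ_self _)
      refine ((isLittleO_cobounded_of_degree_lt h).comp_tendsto hx).trans_isBigO ?_
      simpa [Function.comp_def] using hxy ((Q.coeff i).natDegree + 1)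
    refine (hcoeff.mul_isBigO (isBigO_refl (y · ^ i) l)).trans_isBigO ?_
    obtain ⟨j, hj⟩ := Nat.exists_eq_add_of_lt hi
    simpa [hj, ← pow_succ', ← pow_add, add_right_comm] using
      (isBigO_refl (y · ^ (i + 1)) l).mul (hone.pow j)
  have hequiv : (fun a => Q.evalEval (x a) (y a)) ~[l]
      fun a => Q.leadingCoeff.eval (x a) * y a ^ Q.natDegree := by
    have hsum := IsLittleO.fun_sum fun i hi => hlower i (Finset.mem_range.mp hi)
    refine ((hsum.trans_isBigO hlead).add_isEquivalent .refl).congr_left (.of_forall fun a => ?_)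
    simp [evalEval, eval_eq_sum_range (p := Q), Finset.sum_range_succ, eval_finsetSum]
  have h1 := ((hone.pow Q.natDegree).trans hlead).trans hequiv.isBigO_symm
  filter_upwards [h1.eq_zero_imp] with a ha h0
  simpa using ha h0

lemma evalEval_aeval_snoc {R : Type*} [CommRing R] {n : ℕ} (P : MvPolynomial (Fin (n + 1)) R)
    (d : Fin n → R) (t w : R) :
    (MvPolynomial.aeval (Fin.snoc (fun i => C (C (d i) * X)) X : Fin (n + 1) → R[X][Y]) P).evalEval
      t w = MvPolynomial.eval (Fin.snoc (fun i => d i * t) w : Fin (n + 1) → R) P := by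
  rw [← coe_evalEvalRingHom, MvPolynomial.aeval_def, MvPolynomial.hom_eval₂, MvPolynomial.eval,
    MvPolynomial.coe_eval₂Hom]
  congr 1
  · ext a
    simp
  · funext i
    induction i using Fin.lastCases <;> simp

lemma exists_evalEval_eq_eval_snoc_mul {R : Type*} [CommRing R] [IsDomain R] {n : ℕ}
    {P : MvPolynomial (Fin (n + 1)) R} (hP : P ≠ 0) {T : Set R} (hT : T.Infinite) :
    ∃ d : Fin n → R, (∀ i, d i ∈ T) ∧ ∃ Q : R[X][Y], Q ≠ 0 ∧
      ∀ t w, Q.evalEval t w = MvPolynomial.eval (Fin.snoc (fun i => d i * t) w) P := by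
  obtain ⟨x, hxT, hxP⟩ : ∃ x : Fin (n + 1) → R, (∀ i, x i ∈ T) ∧ MvPolynomial.eval x P ≠ 0 := by
    by_contra! hvanish
    exact hP (MvPolynomial.funext_set (fun _ => T) (fun _ => hT) fun x hx => by
      rw [hvanish x fun i => hx i (Set.mem_univ i), map_zero])
  refine ⟨Fin.init x, fun i => hxT i.castSucc, _, ?_, evalEval_aeval_snoc P (Fin.init x)⟩
  intro hQ
  have hline := evalEval_aeval_snoc P (Fin.init x) 1 (x (Fin.last n))
  rw [hQ, evalEval_zero] at hline
  simp only [mul_one, Fin.snoc_init_self] at hline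
  exact hxP hline.symm

lemma pow_isBigO_monomialSeries_ofReal {σ : Type*} [Fintype σ] [Nonempty σ] {c : (σ → ℕ) → ℝ}
    {C : ℝ} (hc : ∀ k, |c k| ≤ C * invFactorial k) (hc0 : ∀ k, 0 < c k) {d : σ → ℝ}
    (hd : ∀ i, 0 < d i) (N : ℕ) :
    (fun t : ℝ => (t : ℂ) ^ N) =O[atTop]
      fun t : ℝ => monomialSeries (fun k => c k) fun i => d i * t := by
  classical
  let k : σ → ℕ := Pi.single (Classical.arbitrary σ) N
  have hmonomial (k : σ → ℕ) (t : ℝ) :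
      (c k : ℂ) * ∏ i, ((d i : ℂ) * t) ^ k i = (c k * ∏ i, (d i * t) ^ k i : ℝ) := by
    push_cast; rfl
  have hpos : 0 < c k * d (Classical.arbitrary σ) ^ N := mul_pos (hc0 k) (pow_pos (hd _) N)
  refine IsBigO.of_bound (c k * d (Classical.arbitrary σ) ^ N)⁻¹ ?_
  filter_upwards [eventually_ge_atTop 0] with t ht
  have hsum := Complex.hasSum_re (hasSum_monomialSeries (c := fun k => (c k : ℂ))
    (by simpa using hc) fun i => d i * t)
  simp only [hmonomial, Complex.ofReal_re] at hsum
  rw [inv_mul_eq_div, le_div_iff₀' hpos]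
  calc c k * d (Classical.arbitrary σ) ^ N * ‖(t : ℂ) ^ N‖
      = c k * ∏ i, (d i * t) ^ k i := by
        simp only [k]
        rw [prod_pow_single fun i => d i * t]
        simp [mul_pow, abs_of_nonneg ht, mul_assoc]
    _ ≤ (monomialSeries (fun k => (c k : ℂ)) fun i => d i * t).re :=
        le_hasSum hsum k fun k' _ => mul_nonneg (hc0 k').le
          (Finset.prod_nonneg fun i _ => pow_nonneg (mul_nonneg (hd i).le ht) _)
    _ ≤ _ := Complex.re_le_norm _

theorem not_exists_eval_snoc_monomialSeries_eq_zero {n : ℕ} [NeZero n] {c : (Fin n → ℕ) → ℝ}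
    {C : ℝ} (hc : ∀ k, |c k| ≤ C * invFactorial k) (hc0 : ∀ k, 0 < c k) :
    ¬∃ P : MvPolynomial (Fin (n + 1)) ℂ, P ≠ 0 ∧
      ∀ z, MvPolynomial.eval (Fin.snoc z (monomialSeries (fun k => c k) z)) P = 0 := by
  rintro ⟨P, hP, hzero⟩
  obtain ⟨d, hd, Q, hQ, hPQ⟩ := exists_evalEval_eq_eval_snoc_mul hP
    ((Set.Ioi_infinite (0 : ℝ)).image Complex.ofReal_injective.injOn)
  choose r hr hrd using hd
  obtain rfl : (fun i => (r i : ℂ)) = d := funext hrd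
  obtain ⟨t, ht⟩ := (eventually_evalEval_ne_zero (RCLike.tendsto_ofReal_atTop_cobounded ℂ)
    (pow_isBigO_monomialSeries_ofReal hc hc0 hr) hQ).exists
  exact ht ((hPQ _ _).trans (hzero fun i => r i * t))

end Transcendence

section AlgebraicPoints

lemma isAlgebraic_conj_iff {z : ℂ} : IsAlgebraic ℚ ((starRingEnd ℂ) z) ↔ IsAlgebraic ℚ z :=
  isAlgebraic_algHom_iff (Complex.conjAe.toAlgHom.restrictScalars ℚ) Complex.conjAe.injective

lemma isAlgebraic_ofReal_iff {x : ℝ} : IsAlgebraic ℚ (x : ℂ) ↔ IsAlgebraic ℚ x :=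
  isAlgebraic_algHom_iff (Complex.ofRealAm.restrictScalars ℚ) Complex.ofReal_injective

lemma isAlgebraic_iff_isAlgebraic_reAddIm {z : ℂ} :
    IsAlgebraic ℚ z ↔
      IsAlgebraic ℚ (reAddIm z) ∧ IsAlgebraic ℚ (reAddIm ((starRingEnd ℂ) z)) := by
  have hI : IsAlgebraic ℚ Complex.I := Complex.isIntegral_rat_I.isAlgebraic
  have hadd : IsAlgebraic ℚ ((1 + Complex.I) / 2) := by
    simpa [div_eq_mul_inv] using (isAlgebraic_one.add hI).mul (isAlgebraic_natCast 2).inv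
  have hsub : IsAlgebraic ℚ ((1 - Complex.I) / 2) := by
    simpa [div_eq_mul_inv] using (isAlgebraic_one.sub hI).mul (isAlgebraic_natCast 2).inv
  have hre {w : ℂ} (hw : IsAlgebraic ℚ w) : IsAlgebraic ℚ (reAddIm w) :=
    isAlgebraic_ofReal_iff.mp (ofReal_reAddIm w ▸
      (hsub.mul hw).add (hadd.mul (isAlgebraic_conj_iff.mpr hw)))
  refine ⟨fun hz => ⟨hre hz, hre (isAlgebraic_conj_iff.mpr hz)⟩, fun ⟨h, h'⟩ => ?_⟩
  rw [eq_reAddIm_add_reAddIm_conj z]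
  exact (hadd.mul (isAlgebraic_ofReal_iff.mpr h)).add (hsub.mul (isAlgebraic_ofReal_iff.mpr h'))

/-- The points of `ℂ ^ σ` with algebraic coordinates, the paper's `Q̄ ^ m` for `σ = Fin m`. -/
def algebraicPoints (σ : Type*) : Set (σ → ℂ) := {z | ∀ i, IsAlgebraic ℚ (z i)}

lemma countable_algebraicPoints (σ : Type*) [Finite σ] : (algebraicPoints σ).Countable := by
  simpa [Set.pi, algebraicPoints] using
    Set.countable_univ_pi fun _ : σ => Algebraic.countable ℚ ℂ

lemma infinite_algebraicPoints (σ : Type*) [Nonempty σ] : (algebraicPoints σ).Infinite :=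
  Set.infinite_of_injective_forall_mem (f := fun (n : ℕ) (_ : σ) => (n : ℂ))
    (fun _ _ h => Nat.cast_injective (congrFun h (Classical.arbitrary σ)))
    fun n _ => isAlgebraic_natCast n

lemma star_mem_algebraicPoints {σ : Type*} {z : σ → ℂ} (hz : z ∈ algebraicPoints σ) :
    star z ∈ algebraicPoints σ := fun i => isAlgebraic_conj_iff.mpr (hz i)

theorem exists_coeff_isAlgebraic_monomialSeries_iff {σ : Type*} [Fintype σ] {S : Set (σ → ℂ)}
    (hSconj : ∀ z ∈ S, star z ∈ S) (hS0 : 0 ∈ S) (b : (σ → ℂ) → ℂ) :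
    ∃ c : (σ → ℕ) → ℝ, (∀ k, 0 < c k) ∧ (∀ k, |c k| ≤ 2 * invFactorial k) ∧
      (∀ k, c k ∈ Set.range ((↑) : ℚ → ℝ)) ∧ ∀ z ∈ algebraicPoints σ,
        (IsAlgebraic ℚ (monomialSeries (fun k => c k) z) ↔ z ∈ S) ∧
        (z ≠ 0 → monomialSeries (fun k => c k) z ≠ b z) := by
  classical
  let B (z : σ → ℂ) : Set ℝ :=
    (if z ∈ S then Set.range ((↑) : ℚ → ℝ) else {x | IsAlgebraic ℚ x}ᶜ) \ {reAddIm (b z)}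
  have hB (z) : Dense (B z) := by
    refine Dense.sdiff_singleton ?_ _
    split_ifs
    · exact Rat.denseRange_cast
    · exact (Algebraic.countable ℚ ℝ).dense_compl ℝ
  obtain ⟨c, hc0, hcC, hcQ, hc⟩ := exists_coeff_mem_and_reAddIm_monomialSeries_mem
    (X := algebraicPoints σ \ {0}) ((countable_algebraicPoints σ).mono Set.sdiff_subset)
    (Set.notMem_sdiff_of_mem rfl) (fun _ => Rat.denseRange_cast) hB
  refine ⟨c, hc0, hcC, hcQ, fun z hz => ⟨?_, fun hz0 h => (hc z ⟨hz, hz0⟩).2 (by rw [h]; rfl)⟩⟩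
  obtain rfl | hz0 := eq_or_ne z 0
  · obtain ⟨q, hq⟩ := hcQ 0
    rw [monomialSeries_zero, ← hq]
    exact iff_of_true (isAlgebraic_ofReal_iff.mpr (isAlgebraic_algebraMap q)) hS0
  have hrat (w) (hw : w ∈ algebraicPoints σ \ {0}) (hwS : w ∈ S) :
      IsAlgebraic ℚ (reAddIm (monomialSeries (fun k => c k) w)) := by
    obtain ⟨q, hq⟩ : _ ∈ Set.range ((↑) : ℚ → ℝ) := by simpa [B, hwS] using (hc w hw).1
    exact hq ▸ isAlgebraic_algebraMap q
  rw [isAlgebraic_iff_isAlgebraic_reAddIm, ← monomialSeries_ofReal_star]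
  refine ⟨fun h => ?_, fun hzS => ⟨hrat z ⟨hz, hz0⟩ hzS,
    hrat (star z) ⟨star_mem_algebraicPoints hz, star_ne_zero.mpr hz0⟩ (hSconj z hzS)⟩⟩
  by_contra hzS
  have := (hc z ⟨hz, hz0⟩).1
  rw [if_neg hzS] at this
  exact this h.1

end AlgebraicPoints

lemma not_countable_of_forall_exists_forall_ne {X Y : Type*} [Nonempty Y] {F : Set (X → Y)}
    {T : Set X} (hT : T.Infinite) (h : ∀ b : X → Y, ∃ f ∈ F, ∀ x ∈ T, f x ≠ b x) :
    ¬F.Countable := by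
  intro hF
  obtain ⟨e, he⟩ := Set.countable_iff_exists_subset_range.mp hF
  let x (n : ℕ) : X := hT.natEmbedding T n
  have hx : Function.Injective x := Subtype.val_injective.comp (hT.natEmbedding T).injective
  obtain ⟨f, hf, hne⟩ := h fun y => e (Function.invFun x y) y
  obtain ⟨n, rfl⟩ := he hf
  exact hne (x n) (hT.natEmbedding T n).2 (by rw [Function.leftInverse_invFun hx n])

/-- every subset `S` of `Q̄^m` closed under complex conjugation and
containing the origin is the exceptional set of uncountably many transcendental
entire functions `f ∈ ℚ[[z₁,…,z_m]]`. -/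
theorem exceptional_set_of_transcendental_entire_functions
    (m : ℕ) (hm : 0 < m) (S : Set (Fin m → ℂ))
    (hSalg : ∀ z ∈ S, ∀ i, IsAlgebraic ℚ (z i))
    (hSconj : ∀ z ∈ S, (fun i => (starRingEnd ℂ) (z i)) ∈ S)
    (hS0 : (0 : Fin m → ℂ) ∈ S) :
    ¬ ({f : (Fin m → ℂ) → ℂ |
        (∀ x, AnalyticAt ℂ f x) ∧
        ¬ (∃ P : MvPolynomial (Fin (m + 1)) ℂ, P ≠ 0 ∧
            ∀ z : Fin m → ℂ, MvPolynomial.eval (Fin.snoc z (f z)) P = 0) ∧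
        (∃ c : (Fin m → ℕ) → ℂ, (∀ k, c k ∈ Set.range ((↑) : ℚ → ℂ)) ∧
            ∀ z : Fin m → ℂ, HasSum (fun k : Fin m → ℕ => c k * ∏ i, z i ^ k i) (f z)) ∧
        {z : Fin m → ℂ | (∀ i, IsAlgebraic ℚ (z i)) ∧ IsAlgebraic ℚ (f z)} = S}).Countable := by
  have : NeZero m := ⟨hm.ne'⟩
  refine not_countable_of_forall_exists_forall_ne
    ((infinite_algebraicPoints (Fin m)).sdiff (Set.finite_singleton 0)) fun b => ?_
  obtain ⟨c, hc0, hcC, hcQ, hc⟩ := exists_coeff_isAlgebraic_monomialSeries_iff hSconj hS0 b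
  have hcC' (k) : ‖(c k : ℂ)‖ ≤ 2 * invFactorial k := by simpa using hcC k
  have hcQ' (k) : (c k : ℂ) ∈ Set.range ((↑) : ℚ → ℂ) := by
    obtain ⟨q, hq⟩ := hcQ k
    exact ⟨q, by simp [← hq]⟩
  have hexc : {z | z ∈ algebraicPoints (Fin m) ∧
      IsAlgebraic ℚ (monomialSeries (fun k => c k) z)} = S :=
    Set.ext fun z => ⟨fun ⟨hz, h⟩ => (hc z hz).1.mp h,
      fun hz => ⟨hSalg z hz, (hc z (hSalg z hz)).1.mpr hz⟩⟩
  exact ⟨monomialSeries fun k => c k,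
    ⟨analyticAt_monomialSeries hcC', not_exists_eval_snoc_monomialSeries_eq_zero hcC hc0,
      ⟨fun k => c k, hcQ', hasSum_monomialSeries hcC'⟩, hexc⟩,
    fun z hz => (hc z hz.1).2 hz.2⟩
end

section
/- Let A be a countable subset of ℂ and let K be a dense subset of ℂ. For each α ∈ A fix a dense subset E_α ⊆ ℂ, and suppose that if 0 ∈ A then E_0 ∩ K ≠ ∅. Then the set of transcendental entire functions f ∈ K[[z]] such that f(α) ∈ E_α for all α ∈ A is uncountable. -/
open scoped BigOperators

/-!
The function is built as a limit of polynomials. Its Taylor coefficients and its values at the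
nonzero points of `A`, enumerated as `a₀, a₁, …`, are prescribed one at a time: stage `n` adds
`(e + d z) * ∏ i < n, (z - aᵢ) * z ^ (n + 1)` with small constants `e` and `d`. This leaves all
earlier coefficients and values alone, while `e` moves the coefficient of `z ^ (n + 1)` into `K`
and then `d`, which does not affect that coefficient, moves the value at `aₙ` into `E aₙ`.

Since `K` is dense, each coefficient can moreover avoid any two given numbers. Avoiding `0` makes
the function transcendental, because an algebraic function grows at most polynomially, so that an
entire one is a polynomial by Cauchy's estimates. A diagonal argument uses the second number to make
the function differ from every member of a given countable family.
-/

section Sequences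

variable {α β : Type*}

lemma eq_of_forall_ge_succ_eq {u : ℕ → α} {N : ℕ} (h : ∀ n ≥ N, u (n + 1) = u n) :
    ∀ n ≥ N, u n = u N :=
  fun _ hn => Nat.le_induction rfl (fun k hk ih => (h k hk).trans ih) _ hn

lemma exists_seq_of_forall_exists_rel {r : ℕ → α → α → Prop} (h : ∀ n x, ∃ y, r n x y) (x₀ : α) :
    ∃ s : ℕ → α, s 0 = x₀ ∧ ∀ n, r n (s n) (s (n + 1)) := by
  choose next hnext using h
  exact ⟨fun n => Nat.rec x₀ next n, rfl, fun n => hnext n _⟩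

lemma exists_injective_seq_of_countable_subset_infinite {S T : Set α} (hS : S.Countable)
    (hT : T.Infinite) (hST : S ⊆ T) :
    ∃ a : ℕ → α, Function.Injective a ∧ S ⊆ Set.range a ∧ ∀ n, a n ∈ T := by
  let ι := hT.natEmbedding
  let U : Set α := S ∪ Set.range fun n => (ι n : α)
  have hUT : U ⊆ T := Set.union_subset hST (Set.range_subset_iff.2 fun n => (ι n).2)
  have : Countable U := (hS.union (Set.countable_range _)).to_subtype
  have : Infinite U := ((Set.infinite_range_of_injective
    (Subtype.val_injective.comp ι.injective)).mono Set.subset_union_right).to_subtype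
  obtain ⟨e⟩ : Nonempty (ℕ ≃ U) := nonempty_equiv_of_countable
  exact ⟨fun n => e n, Subtype.val_injective.comp e.injective,
    fun x hx => ⟨e.symm ⟨x, Or.inl hx⟩, by simp⟩, fun n => hUT (e n).2⟩

lemma not_countable_of_forall_exists_forall_ne_s2 [Nonempty β] {S : Set α} (φ : α → ℕ → β)
    (h : ∀ b : ℕ → β, ∃ x ∈ S, ∀ k, φ x k ≠ b k) : ¬ S.Countable := by
  intro hS
  obtain ⟨x₀, hx₀, -⟩ := h fun _ => Classical.arbitrary β
  obtain ⟨g, rfl⟩ := hS.exists_eq_range ⟨x₀, hx₀⟩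
  obtain ⟨_, ⟨k, rfl⟩, hk⟩ := h fun k => φ (g k) k
  exact hk k rfl

end Sequences

section Growth

open Polynomial Polynomial.Bivariate Filter Bornology Asymptotics Topology

lemma norm_le_of_isRoot {𝕜 : Type*} [NormedDivisionRing 𝕜] {p : 𝕜[X]} (hp : p ≠ 0) {w : 𝕜}
    (hw : p.IsRoot w) :
    ‖w‖ ≤ (∑ j ∈ Finset.range p.natDegree, ‖p.coeff j‖) / ‖p.leadingCoeff‖ + 1 := by
  have hsup : (Finset.range p.natDegree).sup (‖p.coeff ·‖₊) ≤
      ∑ j ∈ Finset.range p.natDegree, ‖p.coeff j‖₊ :=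
    Finset.sup_le fun j hj => Finset.single_le_sum (f := (‖p.coeff ·‖₊)) (fun _ _ => zero_le) hj
  have hbound : ‖w‖₊ ≤ (∑ j ∈ Finset.range p.natDegree, ‖p.coeff j‖₊) / ‖p.leadingCoeff‖₊ + 1 := by
    refine (hw.norm_lt_cauchyBound hp).le.trans ?_
    unfold cauchyBound
    gcongr
  simpa using NNReal.coe_le_coe.2 hbound

variable {𝕜 : Type*} [NormedField 𝕜]

lemma isBigO_cobounded_eval_pow {p : 𝕜[X]} {N : ℕ} (hN : p.natDegree ≤ N) :
    p.eval =O[cobounded 𝕜] (· ^ N) := by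
  have hdeg : p.degree ≤ (X ^ N : 𝕜[X]).degree := by
    simpa only [degree_X_pow] using natDegree_le_iff_degree_le.1 hN
  simpa using isBigO_cobounded_of_degree_le hdeg

lemma isBigO_cobounded_inv_eval {p : 𝕜[X]} (hp : p ≠ 0) :
    (fun z => (p.eval z)⁻¹) =O[cobounded 𝕜] fun _ => (1 : 𝕜) := by
  have h : (fun _ => (1 : 𝕜)) =O[cobounded 𝕜] p.eval := by
    simpa using isBigO_cobounded_of_degree_le (P := 1) (by simpa using zero_le_degree_iff.2 hp)
  simpa using h.inv_rev (by simp)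

lemma eventually_cobounded_eval_ne_zero {p : 𝕜[X]} (hp : p ≠ 0) :
    ∀ᶠ z in cobounded 𝕜, p.eval z ≠ 0 :=
  (finite_setOfPred_isRoot hp).isBounded

lemma exists_isBigO_pow_of_evalEval_eq_zero {Q : 𝕜[X][Y]} (hQ : Q ≠ 0) {f : 𝕜 → 𝕜}
    (hf : ∀ z, Q.evalEval z (f z) = 0) : ∃ N : ℕ, f =O[cobounded 𝕜] (· ^ N) := by
  set N := ∑ j ∈ Finset.range Q.natDegree, (Q.coeff j).natDegree
  have hnum : (fun z => ∑ j ∈ Finset.range Q.natDegree, ‖(Q.coeff j).eval z‖) =O[cobounded 𝕜]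
      fun z => ‖z ^ N‖ :=
    IsBigO.fun_sum fun j hj => .norm_norm <| isBigO_cobounded_eval_pow <|
      Finset.single_le_sum (f := fun j => (Q.coeff j).natDegree) (fun _ _ => Nat.zero_le _) hj
  have hden := (isBigO_cobounded_inv_eval (leadingCoeff_ne_zero.2 hQ)).norm_norm
  have hone : (fun _ => (1 : ℝ)) =O[cobounded 𝕜] fun z => ‖z ^ N‖ := by
    simpa using (isBigO_cobounded_eval_pow (p := (1 : 𝕜[X])) (N := N) (by simp)).norm_norm
  have hbound : (fun z => (∑ j ∈ Finset.range Q.natDegree, ‖(Q.coeff j).eval z‖) /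
      ‖Q.leadingCoeff.eval z‖ + 1) =O[cobounded 𝕜] fun z => ‖z ^ N‖ :=
    .add (by simpa [div_eq_mul_inv] using hnum.mul hden) hone
  refine ⟨N, IsBigO.trans (IsBigO.of_bound' ?_) hbound.of_norm_right⟩
  filter_upwards [eventually_cobounded_eval_ne_zero (leadingCoeff_ne_zero.2 hQ)] with z hz
  have hlc : evalRingHom z Q.leadingCoeff ≠ 0 := hz
  have hmap : Q.map (evalRingHom z) ≠ 0 := fun h => hlc <| by
    simpa using congrArg (coeff · Q.natDegree) h
  have hroot : (Q.map (evalRingHom z)).IsRoot (f z) := by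
    rw [IsRoot, map_evalRingHom_eval, hf]
  have hle := norm_le_of_isRoot hmap hroot
  simp only [leadingCoeff_map_of_leadingCoeff_ne_zero _ hlc,
    natDegree_map_of_leadingCoeff_ne_zero _ hlc, coeff_map, coe_evalRingHom] at hle
  exact hle.trans (le_abs_self _)

lemma eval_equivMvPolynomial {R : Type*} [CommSemiring R] (x y : R) (Q : R[X][Y]) :
    MvPolynomial.eval ![x, y] (equivMvPolynomial R Q) = Q.evalEval x y := by
  have h : (MvPolynomial.eval ![x, y]).comp (equivMvPolynomial R : R[X][Y] →+* _) =
      evalEvalRingHom x y := by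
    ext <;> simp
  exact DFunLike.congr_fun h Q

lemma iteratedDeriv_eq_zero_of_isBigO_pow {F : Type*} [NormedAddCommGroup F] [NormedSpace ℂ F]
    [CompleteSpace F] {f : ℂ → F} (hf : Differentiable ℂ f) {N n : ℕ}
    (hO : f =O[cobounded ℂ] fun z => z ^ N) (hn : N < n) (c : ℂ) : iteratedDeriv n f c = 0 := by
  have hid : (fun z : ℂ => z) =O[cobounded ℂ] fun z => z - c :=
    (isLittleO_const_id_cobounded c).right_isBigO_sub
  obtain ⟨M, hM⟩ := (hO.trans (hid.pow N)).bound
  obtain ⟨R, -, hR⟩ := (Metric.hasBasis_cobounded_compl_closedBall c).mem_iff.1 hM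
  have hcauchy : ∀ᶠ r : ℝ in atTop,
      ‖iteratedDeriv n f c‖ ≤ n.factorial * M * (r ^ N / r ^ n) := by
    filter_upwards [eventually_gt_atTop R, eventually_gt_atTop 0] with r hrR hr
    have hsphere : ∀ z ∈ Metric.sphere c r, ‖f z‖ ≤ M * r ^ N := fun z hz => by
      have hzr : ‖z - c‖ = r := by simpa [dist_eq_norm] using hz
      simpa [hzr] using hR (by simpa [dist_eq_norm, hzr] using hrR : z ∈ (Metric.closedBall c R)ᶜ)
    refine (Complex.norm_iteratedDeriv_le_of_forall_mem_sphere_norm_le n hr hf.diffContOnCl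
      hsphere).trans_eq ?_
    ring
  have hlim : Tendsto (fun r : ℝ => n.factorial * M * (r ^ N / r ^ n)) atTop (𝓝 0) := by
    simpa using (tendsto_pow_div_pow_atTop_zero hn).const_mul (n.factorial * M)
  exact norm_le_zero_iff.1 (ge_of_tendsto hlim hcauchy)

lemma exists_forall_iteratedDeriv_eq_zero_of_algebraic {f : ℂ → ℂ} (hf : Differentiable ℂ f)
    (halg : ∃ P : MvPolynomial (Fin 2) ℂ, P ≠ 0 ∧ ∀ z, MvPolynomial.eval ![z, f z] P = 0) (c : ℂ) :
    ∃ N, ∀ n > N, iteratedDeriv n f c = 0 := by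
  obtain ⟨P, hP, hPf⟩ := halg
  obtain ⟨Q, rfl⟩ := (equivMvPolynomial ℂ).surjective P
  obtain ⟨N, hN⟩ := exists_isBigO_pow_of_evalEval_eq_zero (Q := Q) (by simpa using hP)
    fun z => by rw [← eval_equivMvPolynomial, hPf]
  exact ⟨N, fun n hn => iteratedDeriv_eq_zero_of_isBigO_pow hf hN hn c⟩

end Growth

section PowerSeries

variable {𝕜 : Type*} [NontriviallyNormedField 𝕜] {c : ℕ → 𝕜} {f : 𝕜 → 𝕜}

lemma hasFPowerSeriesOnBall_ofScalars (h : ∀ z, HasSum (fun k => c k * z ^ k) (f z)) :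
    HasFPowerSeriesOnBall f (FormalMultilinearSeries.ofScalars 𝕜 c) 0 ⊤ where
  r_le := by
    refine ENNReal.le_of_forall_nnreal_lt fun r _ => ?_
    obtain ⟨z, hz⟩ := NormedField.exists_lt_norm 𝕜 r
    have hzr : (r : ENNReal) ≤ ‖z‖₊ := by exact_mod_cast hz.le
    refine hzr.trans (FormalMultilinearSeries.le_radius_of_tendsto _ (l := 0) ?_)
    simpa using (h z).summable.tendsto_atTop_zero.norm
  r_pos := by simp
  hasSum := fun {y} _ => by
    simpa [FormalMultilinearSeries.ofScalars_apply_eq, mul_comm] using h y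

variable [CompleteSpace 𝕜]

lemma analyticAt_of_forall_hasSum (h : ∀ z, HasSum (fun k => c k * z ^ k) (f z)) (x : 𝕜) :
    AnalyticAt 𝕜 f x :=
  (hasFPowerSeriesOnBall_ofScalars h).analyticAt_of_mem (by simp)

lemma iteratedDeriv_div_factorial_of_forall_hasSum [CharZero 𝕜]
    (h : ∀ z, HasSum (fun k => c k * z ^ k) (f z)) (k : ℕ) :
    iteratedDeriv k f 0 / k.factorial = c k :=
  congrFun (FormalMultilinearSeries.ofScalars_series_injective 𝕜 𝕜
    ((analyticAt_of_forall_hasSum h 0).hasFPowerSeriesAt.eq_formalMultilinearSeries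
      (hasFPowerSeriesOnBall_ofScalars h).hasFPowerSeriesAt)) k

end PowerSeries

lemma not_algebraic_of_forall_coeff_succ_ne_zero {c : ℕ → ℂ} {f : ℂ → ℂ}
    (h : ∀ z, HasSum (fun k => c k * z ^ k) (f z)) (hc : ∀ k, c (k + 1) ≠ 0) :
    ¬ ∃ P : MvPolynomial (Fin 2) ℂ, P ≠ 0 ∧ ∀ z, MvPolynomial.eval ![z, f z] P = 0 := by
  intro halg
  have hf : Differentiable ℂ f := fun x => (analyticAt_of_forall_hasSum h x).differentiableAt
  obtain ⟨N, hN⟩ := exists_forall_iteratedDeriv_eq_zero_of_algebraic hf halg 0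
  apply hc N
  rw [← iteratedDeriv_div_factorial_of_forall_hasSum h, hN (N + 1) N.lt_succ_self, zero_div]

section Interpolation

open Polynomial Filter Topology

section CoeffNorm

variable {𝕜 : Type*} [NormedField 𝕜]

/-- The weighted `ℓ¹` norm `∑ ‖pₖ‖ rᵏ` of the coefficients of a polynomial `p`, which bounds `p` on
the disc of radius `r` termwise. -/
noncomputable def coeffNorm (r : ℝ) (p : 𝕜[X]) : ℝ :=
  ∑' k, ‖p.coeff k‖ * r ^ k

lemma hasSum_coeff_mul_pow (p : 𝕜[X]) (z : 𝕜) :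
    HasSum (fun k => p.coeff k * z ^ k) (p.eval z) := by
  rw [eval_eq_sum]
  exact hasSum_sum_of_ne_finset_zero fun k hk => by simp [notMem_support_iff.1 hk]

lemma summable_norm_coeff_mul_pow (p : 𝕜[X]) (r : ℝ) : Summable fun k => ‖p.coeff k‖ * r ^ k :=
  summable_of_ne_finset_zero (s := p.support) fun k hk => by simp [notMem_support_iff.1 hk]

lemma coeffNorm_nonneg {r : ℝ} (hr : 0 ≤ r) (p : 𝕜[X]) : 0 ≤ coeffNorm r p :=
  tsum_nonneg fun _ => by positivity

lemma coeffNorm_mono {r t : ℝ} (hr : 0 ≤ r) (hrt : r ≤ t) (p : 𝕜[X]) :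
    coeffNorm r p ≤ coeffNorm t p :=
  (summable_norm_coeff_mul_pow p r).tsum_le_tsum (fun _ => by gcongr)
    (summable_norm_coeff_mul_pow p t)

lemma coeffNorm_add_le {r : ℝ} (hr : 0 ≤ r) (p q : 𝕜[X]) :
    coeffNorm r (p + q) ≤ coeffNorm r p + coeffNorm r q := by
  have hp := summable_norm_coeff_mul_pow p r
  have hq := summable_norm_coeff_mul_pow q r
  rw [coeffNorm, coeffNorm, coeffNorm, ← hp.tsum_add hq]
  refine (summable_norm_coeff_mul_pow _ r).tsum_le_tsum (fun k => ?_) (hp.add hq)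
  rw [coeff_add, ← add_mul]
  gcongr
  exact norm_add_le _ _

lemma coeffNorm_C_mul (r : ℝ) (e : 𝕜) (p : 𝕜[X]) :
    coeffNorm r (C e * p) = ‖e‖ * coeffNorm r p := by
  simp only [coeffNorm, coeff_C_mul, norm_mul, mul_assoc, tsum_mul_left]

lemma summable_coeffNorm_of_le_geometric {q : ℕ → 𝕜[X]}
    (hq : ∀ n : ℕ, coeffNorm n (q n) ≤ (1 / 2) ^ n) {r : ℝ} (hr : 0 ≤ r) :
    Summable fun n => coeffNorm r (q n) := by
  refine summable_geometric_two.of_norm_bounded_eventually_nat ?_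
  filter_upwards [eventually_ge_atTop ⌈r⌉₊] with n hn
  rw [Real.norm_of_nonneg (coeffNorm_nonneg hr _)]
  exact (coeffNorm_mono hr (Nat.ceil_le.1 hn) _).trans (hq n)

end CoeffNorm

section Limit

lemma hasSum_succ_sub_iff_tendsto {M : Type*} [AddCommGroup M] [TopologicalSpace M]
    [IsTopologicalAddGroup M] [T2Space M] {u : ℕ → M} (hu : Summable fun n => u (n + 1) - u n)
    (l : M) : HasSum (fun n => u (n + 1) - u n) (l - u 0) ↔ Tendsto u atTop (𝓝 l) := by
  simp only [hu.hasSum_iff_tendsto_nat, Finset.sum_range_sub, tendsto_sub_const_iff]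

lemma exists_hasSum_and_tendsto_eval {𝕜 : Type*} [NormedField 𝕜] [CompleteSpace 𝕜] {s : ℕ → 𝕜[X]}
    {c : ℕ → 𝕜} {z : 𝕜} (hs : Summable fun n => coeffNorm ‖z‖ (s (n + 1) - s n))
    (hc : ∀ k, Tendsto (fun n => (s n).coeff k) atTop (𝓝 (c k))) :
    ∃ w, HasSum (fun k => c k * z ^ k) w ∧ Tendsto (fun n => (s n).eval z) atTop (𝓝 w) := by
  have hdouble : Summable fun p : ℕ × ℕ =>
      (s (p.1 + 1)).coeff p.2 * z ^ p.2 - (s p.1).coeff p.2 * z ^ p.2 := by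
    refine .of_norm ((summable_prod_of_nonneg fun _ => norm_nonneg _).2 ?_)
    simp only [← sub_mul, ← coeff_sub, norm_mul, norm_pow]
    exact ⟨fun n => summable_norm_coeff_mul_pow _ _, hs⟩
  obtain ⟨w, hw⟩ := hdouble
  have hrows : HasSum (fun n => (s (n + 1)).eval z - (s n).eval z) w := by
    refine hw.prod_fiberwise fun n => ?_
    exact (hasSum_coeff_mul_pow (s (n + 1)) z).sub (hasSum_coeff_mul_pow (s n) z)
  have hcols : HasSum (fun k => c k * z ^ k - (s 0).coeff k * z ^ k) w := by
    have hswap := (Equiv.prodComm ℕ ℕ).hasSum_iff.2 hw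
    refine hswap.prod_fiberwise fun k => ?_
    have hk : Summable fun n => (s (n + 1)).coeff k * z ^ k - (s n).coeff k * z ^ k :=
      hswap.summable.prod_factor k
    exact (hasSum_succ_sub_iff_tendsto (u := fun n => (s n).coeff k * z ^ k) hk _).2
      ((hc k).mul_const _)
  refine ⟨w + (s 0).eval z, ?_, ?_⟩
  · simpa using hcols.add (hasSum_coeff_mul_pow (s 0) z)
  · exact (hasSum_succ_sub_iff_tendsto (u := fun n => (s n).eval z) hrows.summable _).1
      (by rwa [add_sub_cancel_right])

end Limit

section Correction

variable {𝕜 : Type*} [NormedField 𝕜]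

lemma exists_norm_lt_add_mul_mem {S : Set 𝕜} (hS : Dense S) (x : 𝕜) {y : 𝕜} (hy : y ≠ 0) {ε : ℝ}
    (hε : 0 < ε) : ∃ e, ‖e‖ < ε ∧ x + e * y ∈ S := by
  have hy' : 0 < ‖y‖ := norm_pos_iff.2 hy
  obtain ⟨s, hs, hdist⟩ := hS.exists_dist_lt x (mul_pos hε hy')
  refine ⟨(s - x) / y, ?_, ?_⟩
  · rwa [norm_div, div_lt_iff₀ hy', ← dist_eq_norm, dist_comm]
  · simpa [div_mul_cancel₀ _ hy] using hs

lemma exists_dvd_coeff_mem_eval_mem {S T : Set 𝕜} (hS : Dense S) (hT : Dense T) {B : 𝕜[X]} {n : ℕ}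
    (hn : B.coeff n = 0) (hn' : B.coeff (n + 1) ≠ 0) {a : 𝕜} (ha : a ≠ 0) (hBa : B.eval a ≠ 0)
    (p : 𝕜[X]) {r η : ℝ} (hr : 0 ≤ r) (hη : 0 < η) :
    ∃ q, B ∣ q - p ∧ q.coeff (n + 1) ∈ S ∧ q.eval a ∈ T ∧ coeffNorm r (q - p) ≤ η := by
  have hB := coeffNorm_nonneg hr B
  have hXB := coeffNorm_nonneg hr (X * B)
  set δ := η / (coeffNorm r B + coeffNorm r (X * B) + 1)
  have hδ : 0 < δ := by positivity
  obtain ⟨e, he, heS⟩ := exists_norm_lt_add_mul_mem hS (p.coeff (n + 1)) hn' hδ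
  obtain ⟨d, hd, hdT⟩ :=
    exists_norm_lt_add_mul_mem hT (p.eval a + e * B.eval a) (mul_ne_zero ha hBa) hδ
  refine ⟨p + (C e * B + C d * (X * B)), ?_, ?_, ?_, ?_⟩
  · rw [add_sub_cancel_left]
    exact dvd_add (dvd_mul_left _ _) ((dvd_mul_left B X).mul_left _)
  · simpa [coeff_X_mul, hn] using heS
  · simpa [add_assoc] using hdT
  · rw [add_sub_cancel_left]
    calc coeffNorm r (C e * B + C d * (X * B))
        ≤ ‖e‖ * coeffNorm r B + ‖d‖ * coeffNorm r (X * B) := by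
          rw [← coeffNorm_C_mul, ← coeffNorm_C_mul]
          exact coeffNorm_add_le hr _ _
      _ ≤ δ * coeffNorm r B + δ * coeffNorm r (X * B) := by gcongr
      _ ≤ δ * (coeffNorm r B + coeffNorm r (X * B) + 1) := by linarith
      _ = η := div_mul_cancel₀ _ (by positivity)

end Correction

section CorrectionFactor

variable {R : Type*} [CommRing R]

/-- The polynomial `∏ i < n, (X - aᵢ) * X ^ (n + 1)`. Adding a multiple of it to a polynomial
changes neither the values at `a₀, …, aₙ₋₁` nor the coefficients of index at most `n`. -/
noncomputable def correctionFactor (a : ℕ → R) (n : ℕ) : R[X] :=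
  Lagrange.nodal (Finset.range n) a * X ^ (n + 1)

lemma coeff_eq_of_correctionFactor_dvd_sub {a : ℕ → R} {n k : ℕ} {p q : R[X]}
    (h : correctionFactor a n ∣ q - p) (hk : k ≤ n) : q.coeff k = p.coeff k := by
  rw [← sub_eq_zero, ← coeff_sub]
  exact X_pow_dvd_iff.1 ((dvd_mul_left _ _).trans h) k (Nat.lt_succ_of_le hk)

lemma eval_eq_of_correctionFactor_dvd_sub {a : ℕ → R} {n m : ℕ} {p q : R[X]}
    (h : correctionFactor a n ∣ q - p) (hm : m < n) : q.eval (a m) = p.eval (a m) := by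
  have hroot : (correctionFactor a n).eval (a m) = 0 := by
    rw [correctionFactor, eval_mul, Lagrange.eval_nodal_at_node (Finset.mem_range.2 hm), zero_mul]
  rw [← sub_eq_zero, ← eval_sub]
  exact eval_eq_zero_of_dvd_of_eval_eq_zero h hroot

lemma coeff_correctionFactor_self (a : ℕ → R) (n : ℕ) : (correctionFactor a n).coeff n = 0 := by
  simp [correctionFactor, coeff_mul_X_pow']

variable [IsDomain R]

lemma coeff_succ_correctionFactor_ne_zero {a : ℕ → R} (ha : ∀ n, a n ≠ 0) (n : ℕ) :
    (correctionFactor a n).coeff (n + 1) ≠ 0 := by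
  rw [correctionFactor, coeff_mul_X_pow', if_pos le_rfl, Nat.sub_self, coeff_zero_eq_eval_zero]
  exact Lagrange.eval_nodal_not_at_node fun i _ => (ha i).symm

lemma eval_correctionFactor_ne_zero {a : ℕ → R} (ha : ∀ n, a n ≠ 0) (hinj : Function.Injective a)
    (n : ℕ) : (correctionFactor a n).eval (a n) ≠ 0 := by
  rw [correctionFactor, eval_mul, eval_pow, eval_X]
  exact mul_ne_zero
    (Lagrange.eval_nodal_not_at_node fun i hi => hinj.ne (Finset.mem_range.1 hi).ne')
    (pow_ne_zero _ (ha n))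

end CorrectionFactor

lemma exists_seq_polynomial_coeff_mem_eval_mem {𝕜 : Type*} [NormedField 𝕜] {K E : ℕ → Set 𝕜}
    (hK : ∀ n, Dense (K n)) (hE : ∀ n, Dense (E n)) {a : ℕ → 𝕜} (ha : ∀ n, a n ≠ 0)
    (hinj : Function.Injective a) (c₀ : 𝕜) :
    ∃ s : ℕ → 𝕜[X], s 0 = C c₀ ∧ ∀ n, correctionFactor a n ∣ s (n + 1) - s n ∧
      (s (n + 1)).coeff (n + 1) ∈ K n ∧ (s (n + 1)).eval (a n) ∈ E n ∧
      coeffNorm n (s (n + 1) - s n) ≤ (1 / 2) ^ n :=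
  exists_seq_of_forall_exists_rel
    (r := fun n p q => correctionFactor a n ∣ q - p ∧ q.coeff (n + 1) ∈ K n ∧ q.eval (a n) ∈ E n ∧
      coeffNorm n (q - p) ≤ (1 / 2) ^ n)
    (fun n p => exists_dvd_coeff_mem_eval_mem (hK n) (hE n) (coeff_correctionFactor_self a n)
      (coeff_succ_correctionFactor_ne_zero ha n) (ha n) (eval_correctionFactor_ne_zero ha hinj n) p
      n.cast_nonneg (by positivity))
    (C c₀)

lemma exists_hasSum_coeff_mem_apply_mem_seq {𝕜 : Type*} [NormedField 𝕜] [CompleteSpace 𝕜]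
    {K E : ℕ → Set 𝕜} (hK : ∀ n, Dense (K n)) (hE : ∀ n, Dense (E n)) {a : ℕ → 𝕜}
    (ha : ∀ n, a n ≠ 0) (hinj : Function.Injective a) (c₀ : 𝕜) :
    ∃ (c : ℕ → 𝕜) (f : 𝕜 → 𝕜), c 0 = c₀ ∧ (∀ k, c (k + 1) ∈ K k) ∧
      (∀ z, HasSum (fun k => c k * z ^ k) (f z)) ∧ ∀ n, f (a n) ∈ E n := by
  obtain ⟨s, hs₀, hs⟩ := exists_seq_polynomial_coeff_mem_eval_mem hK hE ha hinj c₀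
  have hcoeff (k : ℕ) : ∀ n ≥ k, (s n).coeff k = (s k).coeff k :=
    eq_of_forall_ge_succ_eq fun n hn => coeff_eq_of_correctionFactor_dvd_sub (hs n).1 hn
  have heval (m : ℕ) : ∀ n ≥ m + 1, (s n).eval (a m) = (s (m + 1)).eval (a m) :=
    eq_of_forall_ge_succ_eq fun n hn => eval_eq_of_correctionFactor_dvd_sub (hs n).1 hn
  choose f hsum hlim using fun z => exists_hasSum_and_tendsto_eval
    (summable_coeffNorm_of_le_geometric (fun n : ℕ => (hs n).2.2.2) (norm_nonneg z))
    fun k => tendsto_atTop_of_eventually_const (hcoeff k)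
  refine ⟨fun k => (s k).coeff k, f, by simp [hs₀], fun k => (hs k).2.1, hsum, fun n => ?_⟩
  rw [tendsto_nhds_unique (hlim (a n)) (tendsto_atTop_of_eventually_const (heval n))]
  exact (hs n).2.2.1

lemma exists_hasSum_coeff_mem_apply_mem {𝕜 : Type*} [NontriviallyNormedField 𝕜] [CompleteSpace 𝕜]
    {A : Set 𝕜} (hA : A.Countable) {K : ℕ → Set 𝕜} (hK : ∀ n, Dense (K n)) {E : 𝕜 → Set 𝕜}
    (hE : ∀ α ∈ A, α ≠ 0 → Dense (E α)) (c₀ : 𝕜) :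
    ∃ (c : ℕ → 𝕜) (f : 𝕜 → 𝕜), c 0 = c₀ ∧ (∀ k, c (k + 1) ∈ K k) ∧
      (∀ z, HasSum (fun k => c k * z ^ k) (f z)) ∧ ∀ α ∈ A, α ≠ 0 → f α ∈ E α := by
  obtain ⟨a, hinj, hrange, ha⟩ := exists_injective_seq_of_countable_subset_infinite
    (hA.mono (Set.sdiff_subset (t := {0}))) (Set.finite_singleton (0 : 𝕜)).infinite_compl
    fun _ hα => hα.2
  have hdense (n : ℕ) : Dense {w | a n ∈ A → w ∈ E (a n)} := by
    by_cases hn : a n ∈ A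
    · simpa [hn] using hE (a n) hn (ha n)
    · simp [hn]
  obtain ⟨c, f, hc₀, hcK, hf, hfa⟩ := exists_hasSum_coeff_mem_apply_mem_seq hK hdense ha hinj c₀
  refine ⟨c, f, hc₀, hcK, hf, fun α hα hα₀ => ?_⟩
  obtain ⟨n, rfl⟩ := hrange ⟨hα, hα₀⟩
  exact hfa n hα

end Interpolation

lemma apply_zero_eq_of_hasSum {R : Type*} [Semiring R] [TopologicalSpace R] [T2Space R]
    {c : ℕ → R} {y : R} (h : HasSum (fun k => c k * 0 ^ k) y) : y = c 0 := by
  simpa using h.unique (hasSum_single 0 fun k hk => by simp [hk])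

theorem uncountably_many_transcendental_entire_functions_one_variable_general
    (A : Set ℂ) (hA : A.Countable)
    (K : ℕ → Set ℂ) (hK : ∀ k, Dense (K k))
    (E : ℂ → Set ℂ) (hE : ∀ α ∈ A, α ≠ 0 → Dense (E α))
    (h0 : (0 : ℂ) ∈ A → (E 0 ∩ K 0).Nonempty) :
    ¬ ({f : ℂ → ℂ |
        (∀ x, AnalyticAt ℂ f x) ∧
        ¬ (∃ P : MvPolynomial (Fin 2) ℂ, P ≠ 0 ∧
            ∀ z : ℂ, MvPolynomial.eval ![z, f z] P = 0) ∧
        (∃ c : ℕ → ℂ, (∀ k, c k ∈ K k) ∧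
            ∀ z : ℂ, HasSum (fun k : ℕ => c k * z ^ k) (f z)) ∧
        (∀ α ∈ A, f α ∈ E α)}).Countable := by
  obtain ⟨c₀, hc₀K, hc₀E⟩ : ∃ c₀ ∈ K 0, 0 ∈ A → c₀ ∈ E 0 := by
    by_cases hA₀ : (0 : ℂ) ∈ A
    · exact (h0 hA₀).imp fun _ hx => ⟨hx.2, fun _ => hx.1⟩
    · exact (hK 0).nonempty.imp fun _ hx => ⟨hx, fun h => absurd h hA₀⟩
  refine not_countable_of_forall_exists_forall_ne_s2
    (fun f k => iteratedDeriv (k + 1) f 0 / (k + 1).factorial) fun b => ?_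
  have hdense (k : ℕ) : Dense (K (k + 1) \ {0, b k}) := (hK (k + 1)).sdiff_finite (by simp)
  obtain ⟨c, f, rfl, hcK, hf, hfA⟩ := exists_hasSum_coeff_mem_apply_mem hA hdense hE c₀
  have hc : ∀ k, c (k + 1) ≠ 0 ∧ c (k + 1) ≠ b k := fun k => by simpa using (hcK k).2
  refine ⟨f, ⟨analyticAt_of_forall_hasSum hf,
    not_algebraic_of_forall_coeff_succ_ne_zero hf fun k => (hc k).1,
    ⟨c, Nat.rec hc₀K fun k _ => (hcK k).1, hf⟩, fun α hα => ?_⟩, fun k => ?_⟩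
  · obtain rfl | hα₀ := eq_or_ne α 0
    · exact apply_zero_eq_of_hasSum (hf 0) ▸ hc₀E hα
    · exact hfA α hα hα₀
  · rw [iteratedDeriv_div_factorial_of_forall_hasSum hf]
    exact (hc k).2

/-- Marques–Ramirez: for a countable `A ⊆ ℂ`, a dense `K ⊆ ℂ`, and
dense targets `E_α ⊆ ℂ` for `α ∈ A` (with `E_0 ∩ K ≠ ∅` if `0 ∈ A`), there are
uncountably many transcendental entire functions `f ∈ K[[z]]` with `f(α) ∈ E_α`
for all `α ∈ A`. -/
theorem uncountably_many_transcendental_entire_functions_one_variable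
    (A : Set ℂ) (hA : A.Countable)
    (K : Set ℂ) (hK : Dense K)
    (E : ℂ → Set ℂ) (hE : ∀ α ∈ A, Dense (E α))
    (h0 : (0 : ℂ) ∈ A → (E 0 ∩ K).Nonempty) :
    ¬ ({f : ℂ → ℂ |
        (∀ x, AnalyticAt ℂ f x) ∧
        ¬ (∃ P : MvPolynomial (Fin 2) ℂ, P ≠ 0 ∧
            ∀ z : ℂ, MvPolynomial.eval ![z, f z] P = 0) ∧
        (∃ c : ℕ → ℂ, (∀ k, c k ∈ K) ∧
            ∀ z : ℂ, HasSum (fun k : ℕ => c k * z ^ k) (f z)) ∧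
        (∀ α ∈ A, f α ∈ E α)}).Countable :=
  uncountably_many_transcendental_entire_functions_one_variable_general A hA (fun _ => K)
    (fun _ => hK) E (fun α hα _ => hE α hα) h0
end
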